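/- Let Φ : ℂⁿ → ℝ be a strictly plurisubharmonic quadratic form. For every N ∈ ℝ there exists C > 0 such that for every entire function u : ℂⁿ → ℂ one has sup_{z ∈ ℂⁿ} ⟨z⟩^{n+N} |u(z)| e^{-Φ(z)} ≤ C · (∫_{ℂⁿ} |u(w)|² ⟨w⟩^{2(N+2n)} e^{-2Φ(w)} dL(w))^{1/2}. -/

import Mathlib

open Matrix MeasureTheory ENNReal

noncomputable section

/-- The squared Euclidean norm `|z|²` on `ℂⁿ`. -/
def eSq {n : ℕ} (z : Fin n → ℂ) : ℝ := ∑ i, Complex.normSq (z i)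

/-- The Japanese bracket `⟨z⟩ = (1 + |z|²)^{1/2}`. -/
def jb {n : ℕ} (z : Fin n → ℂ) : ℝ := Real.sqrt (1 + eSq z)

/-- `Φ : ℂⁿ → ℝ` is a (real) quadratic form of the underlying real coordinates. -/
def IsRQuad {n : ℕ} (Φ : (Fin n → ℂ) → ℝ) : Prop :=
  ∃ B : (Fin n → ℂ) →ₗ[ℝ] (Fin n → ℂ) →ₗ[ℝ] ℝ, ∀ z, Φ z = B z z

/-- `Φ : ℂⁿ → ℝ` is a strictly plurisubharmonic quadratic form.  For a quadratic form `Φ`,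
the Levi form satisfies `(∂²_{z z̄}Φ) w ⋅ w̄ = (Φ(w) + Φ(i w))/2`, so positive definiteness of
the Levi matrix is equivalent to `Φ(w) + Φ(i·w) > 0` for all `w ≠ 0`. -/
def IsSPSH {n : ℕ} (Φ : (Fin n → ℂ) → ℝ) : Prop :=
  IsRQuad Φ ∧ ∀ z : Fin n → ℂ, z ≠ 0 → 0 < Φ z + Φ (Complex.I • z)

/-- The squared weighted norm `‖u‖_s² = ∫ |u(z)|² ⟨z⟩^{2s} e^{-2Φ(z)} L(dz)` (in `ℝ≥0∞`). -/
def hnorm {n : ℕ} (Φ : (Fin n → ℂ) → ℝ) (s : ℝ) (u : (Fin n → ℂ) → ℂ) : ℝ≥0∞ :=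
  ∫⁻ z : Fin n → ℂ, (‖u z‖₊ : ℝ≥0∞) ^ 2 * ENNReal.ofReal (jb z ^ (2 * s) * Real.exp (-2 * Φ z))

/-- A conic subset of `ℂⁿ`. -/
def IsConic {n : ℕ} (V : Set (Fin n → ℂ)) : Prop := ∀ z ∈ V, ∀ t : ℝ, 0 < t → t • z ∈ V

/-- The `1/2`-Gelfand–Shilov wavefront set of `u` relative to `Φ`: the complement in
`ℂⁿ∖{0}` of the points having an open conic neighborhood in `ℂⁿ∖{0}` on which
`|u(z)| ≤ C e^{Φ(z) - c|z|²}`. -/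
def wf {n : ℕ} (Φ : (Fin n → ℂ) → ℝ) (u : (Fin n → ℂ) → ℂ) : Set (Fin n → ℂ) :=
  {z₀ | z₀ ≠ 0 ∧ ¬ ∃ V : Set (Fin n → ℂ), IsOpen V ∧ IsConic V ∧ (0 : Fin n → ℂ) ∉ V ∧ z₀ ∈ V ∧
      ∃ C c : ℝ, 0 < C ∧ 0 < c ∧ ∀ z ∈ V, ‖u z‖ ≤ C * Real.exp (Φ z - c * eSq z)}

/-- A holomorphic quadratic form on `ℂ^{2n} = ℂⁿ_z × ℂⁿ_θ`. -/
def IsCQuad2 {n : ℕ} (Ψ : (Fin n → ℂ) → (Fin n → ℂ) → ℂ) : Prop :=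
  ∃ B : ((Fin n → ℂ) × (Fin n → ℂ)) →ₗ[ℂ] ((Fin n → ℂ) × (Fin n → ℂ)) →ₗ[ℂ] ℂ,
    ∀ z θ, Ψ z θ = B (z, θ) (z, θ)

/-- A real quadratic form on `ℂⁿ × ℂⁿ` viewed as a real vector space. -/
def IsRQuadPair {n : ℕ} (R : (Fin n → ℂ) → (Fin n → ℂ) → ℝ) : Prop :=
  ∃ B : ((Fin n → ℂ) × (Fin n → ℂ)) →ₗ[ℝ] ((Fin n → ℂ) × (Fin n → ℂ)) →ₗ[ℝ] ℝ,
    ∀ z w, R z w = B (z, w) (z, w)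

/-- The Bergman-form integral operator
`G u (z) = a ∫ e^{2Ψ(z, w̄)} u(w) e^{-2Φ(w)} L(dw)`. -/
def berg {n : ℕ} (a : ℂ) (Ψ : (Fin n → ℂ) → (Fin n → ℂ) → ℂ) (Φ : (Fin n → ℂ) → ℝ)
    (u : (Fin n → ℂ) → ℂ) (z : Fin n → ℂ) : ℂ :=
  a * ∫ w : Fin n → ℂ, Complex.exp (2 * Ψ z (star w)) * u w * (Real.exp (-2 * Φ w) : ℂ)

lemma aux_circle {n : ℕ} (v : (Fin n → ℂ) → ℂ) (hv : Differentiable ℂ v) (ζ : Fin n → ℂ) :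
    ENNReal.ofReal (2 * Real.pi) * ‖v 0‖ₑ ≤
      ∫⁻ θ in Set.Ioc 0 (2 * Real.pi), ‖v (circleMap 0 1 θ • ζ)‖ₑ := by
  have hd : Differentiable ℂ (fun l : ℂ => v (l • ζ)) := by fun_prop
  have h := (hd.diffContOnCl (s := Metric.ball (0 : ℂ) |1|)).circleAverage
  rw [Real.circleAverage_def] at h
  have hp : (0 : ℝ) < 2 * Real.pi := by positivity
  rw [inv_smul_eq_iff₀ hp.ne'] at h
  simp only [zero_smul] at h
  rw [intervalIntegral.integral_of_le hp.le] at h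
  calc ENNReal.ofReal (2 * Real.pi) * ‖v 0‖ₑ = ‖(2 * Real.pi) • v 0‖ₑ := by
        rw [enorm_smul, Real.enorm_of_nonneg hp.le]
    _ ≤ _ := by
        rw [← h]
        exact enorm_integral_le_lintegral_enorm _

lemma aux_rot {n : ℕ} (v : (Fin n → ℂ) → ℂ) (hv : Continuous v) (θ : ℝ) :
    ∫⁻ ζ in Metric.ball (0 : Fin n → ℂ) 1, ‖v (circleMap 0 1 θ • ζ)‖ₑ =
      ∫⁻ ζ in Metric.ball (0 : Fin n → ℂ) 1, ‖v ζ‖ₑ := by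
  have h1 : MeasurePreserving (fun ζ : Fin n → ℂ => circleMap 0 1 θ • ζ) := by
    have := volume_preserving_pi (ι := Fin n) (fun _ => (rotation (Circle.exp θ)).measurePreserving)
    convert this using 1
    ext ζ i
    simp [circleMap, rotation_apply]
  have h2 := h1.setLIntegral_comp_preimage (s := Metric.ball (0 : Fin n → ℂ) 1)
    Metric.isOpen_ball.measurableSet (f := fun ζ => ‖v ζ‖ₑ) hv.enorm.measurable
  rw [← h2]
  congr 2
  ext ζ
  simp [norm_smul]

lemma aux_mean {n : ℕ} (v : (Fin n → ℂ) → ℂ) (hv : Differentiable ℂ v) :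
    volume (Metric.ball (0 : Fin n → ℂ) 1) * ‖v 0‖ₑ ≤
      ∫⁻ ζ in Metric.ball (0 : Fin n → ℂ) 1, ‖v ζ‖ₑ := by
  have hp : (0 : ℝ) < 2 * Real.pi := by positivity
  have h0 : ENNReal.ofReal (2 * Real.pi) ≠ 0 := by simpa using Real.pi_pos
  rw [← ENNReal.mul_le_mul_iff_right h0 ENNReal.ofReal_ne_top]
  have hc := hv.continuous
  calc ENNReal.ofReal (2 * Real.pi) * (volume (Metric.ball (0 : Fin n → ℂ) 1) * ‖v 0‖ₑ)
      = ∫⁻ ζ in Metric.ball (0 : Fin n → ℂ) 1, ENNReal.ofReal (2 * Real.pi) * ‖v 0‖ₑ := by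
        rw [setLIntegral_const]; ring
    _ ≤ ∫⁻ ζ in Metric.ball (0 : Fin n → ℂ) 1, ∫⁻ θ in Set.Ioc 0 (2 * Real.pi),
          ‖v (circleMap 0 1 θ • ζ)‖ₑ := lintegral_mono fun ζ => aux_circle v hv ζ
    _ = ∫⁻ θ in Set.Ioc 0 (2 * Real.pi), ∫⁻ ζ in Metric.ball (0 : Fin n → ℂ) 1,
          ‖v (circleMap 0 1 θ • ζ)‖ₑ := by
        apply lintegral_lintegral_swap
        apply Measurable.aemeasurable
        apply Continuous.measurable
        simp only [Function.uncurry_def]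
        have := continuous_circleMap 0 1
        fun_prop
    _ = _ := by
        simp_rw [aux_rot v hc]
        rw [setLIntegral_const, Real.volume_Ioc, sub_zero, mul_comm]

lemma aux_eSq_nonneg {n : ℕ} (z : Fin n → ℂ) : 0 ≤ eSq z :=
  Finset.sum_nonneg fun _ _ => Complex.normSq_nonneg _

lemma aux_one_le_jb {n : ℕ} (z : Fin n → ℂ) : 1 ≤ jb z := by
  rw [jb, Real.one_le_sqrt]; linarith [aux_eSq_nonneg z]

lemma aux_jb {n : ℕ} (a b : Fin n → ℂ) (h : ‖a - b‖ ≤ 1) :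
    jb a ≤ (2 + 2 * n : ℝ) * jb b := by
  have h1 : eSq a ≤ 2 * eSq b + 2 * n := by
    have : eSq a ≤ ∑ i : Fin n, (2 * Complex.normSq (b i) + 2) := by
      apply Finset.sum_le_sum
      intro i _
      have h2 : ‖a i - b i‖ ≤ 1 := (norm_le_pi_norm (a - b) i).trans h
      have h3 : ‖a i‖ ≤ ‖b i‖ + 1 := by
        have := norm_add_le (a i - b i) (b i)
        simp at this; linarith
      rw [Complex.normSq_eq_norm_sq, Complex.normSq_eq_norm_sq]
      nlinarith [norm_nonneg (a i), norm_nonneg (b i), sq_nonneg (‖b i‖ - 1)]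
    refine this.trans (le_of_eq ?_)
    rw [Finset.sum_add_distrib, ← Finset.mul_sum]
    simp [eSq]; ring
  have hb := aux_eSq_nonneg b
  have hn : (0 : ℝ) ≤ n := Nat.cast_nonneg n
  rw [jb, jb]
  apply Real.sqrt_le_iff.2
  refine ⟨by positivity, ?_⟩
  rw [mul_pow, Real.sq_sqrt (by linarith)]
  nlinarith [mul_nonneg hn hb, mul_nonneg hn hn, mul_nonneg (mul_nonneg hn hn) hb]

lemma aux_jb_pow {n : ℕ} (a b : Fin n → ℂ) (h : ‖a - b‖ ≤ 1) (s : ℝ) :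
    jb a ^ s ≤ (2 + 2 * n : ℝ) ^ |s| * jb b ^ s := by
  have ha := aux_one_le_jb a
  have hb := aux_one_le_jb b
  have hK : (0 : ℝ) < 2 + 2 * n := by positivity
  rcases le_total 0 s with hs | hs
  · rw [abs_of_nonneg hs, ← Real.mul_rpow hK.le (by linarith)]
    exact Real.rpow_le_rpow (by linarith) (aux_jb a b h) hs
  · rw [abs_of_nonpos hs, Real.rpow_neg hK.le, ← Real.inv_rpow hK.le,
      ← Real.mul_rpow (inv_nonneg.2 hK.le) (by linarith)]
    apply Real.rpow_le_rpow_of_nonpos (by positivity) _ hs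
    rw [inv_mul_le_iff₀ hK]
    exact aux_jb b a (by rwa [norm_sub_rev])

lemma aux_lin {n : ℕ} (l : (Fin n → ℂ) →ₗ[ℝ] ℝ) :
    ∃ L : (Fin n → ℂ) → ℂ, Differentiable ℂ L ∧ L 0 = 0 ∧ ∀ ζ, (L ζ).re = l ζ := by
  let L : StrongDual ℂ (Fin n → ℂ) :=
    StrongDual.extendRCLikeₗ (𝕜 := ℂ) (LinearMap.toContinuousLinearMap l)
  refine ⟨L, L.differentiable, map_zero L, fun ζ => ?_⟩
  simp [L, StrongDual.extendRCLikeₗ_apply, StrongDual.extendRCLike_apply]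

lemma aux_bdd {n : ℕ} (B : (Fin n → ℂ) →ₗ[ℝ] (Fin n → ℂ) →ₗ[ℝ] ℝ) :
    ∃ M : ℝ, ∀ ζ : Fin n → ℂ, ‖ζ‖ ≤ 1 → B ζ ζ ≤ M := by
  let T := LinearMap.toContinuousLinearMap
    ((LinearMap.toContinuousLinearMap (𝕜 := ℝ) (E := Fin n → ℂ) (F' := ℝ)).toLinearMap ∘ₗ B)
  refine ⟨‖T‖, fun ζ hζ => ?_⟩
  have h := (le_abs_self _).trans (T.le_opNorm₂ ζ ζ)
  have h1 : T ζ ζ = B ζ ζ := rfl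
  rw [h1] at h
  have h2 := norm_nonneg T
  have h3 := norm_nonneg ζ
  calc B ζ ζ ≤ _ := h
    _ ≤ ‖T‖ * 1 * 1 := by gcongr
    _ = _ := by ring

/-- For a strictly plurisubharmonic quadratic form `Φ` on `ℂⁿ` and every
`N ∈ ℝ` there is `C > 0` such that for every entire `u : ℂⁿ → ℂ` and every `z`,
`⟨z⟩^{n+N} |u(z)| e^{-Φ(z)} ≤ C (∫ |u(w)|² ⟨w⟩^{2(N+2n)} e^{-2Φ(w)} dL(w))^{1/2}`. -/
theorem stmt_1 (n : ℕ) (hn : 1 ≤ n) (Φ : (Fin n → ℂ) → ℝ) (hΦ : IsSPSH Φ) (N : ℝ) :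
    ∃ C : ℝ, 0 < C ∧ ∀ u : (Fin n → ℂ) → ℂ, Differentiable ℂ u → ∀ z : Fin n → ℂ,
      ENNReal.ofReal (jb z ^ ((n : ℝ) + N) * ‖u z‖ * Real.exp (-Φ z))
        ≤ ENNReal.ofReal C *
            (∫⁻ w : Fin n → ℂ,
              (‖u w‖₊ : ℝ≥0∞) ^ 2 *
                ENNReal.ofReal (jb w ^ (2 * (N + 2 * n)) * Real.exp (-2 * Φ w))) ^ (1 / 2 : ℝ) := by
  obtain ⟨⟨B, hB⟩, -⟩ := hΦ
  obtain ⟨M, hM⟩ := aux_bdd B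
  set V := volume (Metric.ball (0 : Fin n → ℂ) 1) with hV
  have hV0 : V ≠ 0 := (Metric.measure_ball_pos _ _ one_pos).ne'
  have hVt : V ≠ ⊤ := measure_ball_lt_top.ne
  have hVr : 0 < V.toReal := ENNReal.toReal_pos hV0 hVt
  set A : ℝ := (2 + 2 * n : ℝ) ^ |2 * ((n : ℝ) + N)| * Real.exp (2 * M) with hA
  have hA0 : 0 < A := by positivity
  refine ⟨(A / V.toReal) ^ (1 / 2 : ℝ), by positivity, fun u hu z => ?_⟩
  set J := ∫⁻ w : Fin n → ℂ, (‖u w‖₊ : ℝ≥0∞) ^ 2 *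
                ENNReal.ofReal (jb w ^ (2 * (N + 2 * n)) * Real.exp (-2 * Φ w)) with hJ
  obtain ⟨L, hLd, hL0, hL⟩ := aux_lin (B z + B.flip z)
  have hjz := aux_one_le_jb z
  have key := aux_mean (fun ζ => (u (z + ζ) * Complex.exp (-L ζ)) ^ 2) (by fun_prop)
  have pt : ∀ ζ ∈ Metric.ball (0 : Fin n → ℂ) 1,
      ENNReal.ofReal (jb z ^ (2 * ((n : ℝ) + N)) * Real.exp (-2 * Φ z)) *
        ‖(u (z + ζ) * Complex.exp (-L ζ)) ^ 2‖ₑ ≤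
      ENNReal.ofReal A * ((‖u (z + ζ)‖₊ : ℝ≥0∞) ^ 2 *
        ENNReal.ofReal (jb (z + ζ) ^ (2 * (N + 2 * n)) * Real.exp (-2 * Φ (z + ζ)))) := by
    intro ζ hζ
    have hζ' : ‖ζ‖ ≤ 1 := by simpa using (mem_ball_zero_iff.1 hζ).le
    have hjw := aux_one_le_jb (z + ζ)
    have e1 := aux_jb_pow z (z + ζ) (by simpa using hζ') (2 * ((n : ℝ) + N))
    have e2 : jb (z + ζ) ^ (2 * ((n : ℝ) + N)) ≤ jb (z + ζ) ^ (2 * (N + 2 * n)) := by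
      apply Real.rpow_le_rpow_of_exponent_le hjw
      have : (0 : ℝ) ≤ n := Nat.cast_nonneg n
      linarith
    have e3 : Φ (z + ζ) = Φ z + (L ζ).re + B ζ ζ := by
      rw [hL, hB, hB]; simp; ring
    have e4 := hM ζ hζ'
    have e5 : Real.exp (-2 * Φ z) * Real.exp (-(L ζ).re) ^ 2 ≤
        Real.exp (2 * M) * Real.exp (-2 * Φ (z + ζ)) := by
      rw [← Real.exp_nat_mul, ← Real.exp_add, ← Real.exp_add, Real.exp_le_exp, e3]
      push_cast; linarith
    have n1 : (‖u (z + ζ)‖₊ : ℝ≥0∞) = ENNReal.ofReal ‖u (z + ζ)‖ := by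
      rw [ofReal_norm]; rfl
    rw [n1, ← ofReal_norm, ← ENNReal.ofReal_pow (norm_nonneg _),
      ← ENNReal.ofReal_mul (by positivity), ← ENNReal.ofReal_mul (by positivity),
      ← ENNReal.ofReal_mul (by positivity)]
    apply ENNReal.ofReal_le_ofReal
    rw [norm_pow, norm_mul, Complex.norm_exp, Complex.neg_re, mul_pow]
    calc _ = jb z ^ (2 * ((n : ℝ) + N)) *
          (Real.exp (-2 * Φ z) * Real.exp (-(L ζ).re) ^ 2) * ‖u (z + ζ)‖ ^ 2 := by ring
      _ ≤ ((2 + 2 * n : ℝ) ^ |2 * ((n : ℝ) + N)| * jb (z + ζ) ^ (2 * (N + 2 * n))) *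
          (Real.exp (2 * M) * Real.exp (-2 * Φ (z + ζ))) * ‖u (z + ζ)‖ ^ 2 := by
          have : 0 ≤ jb (z + ζ) ^ (2 * (N + 2 * n)) := by positivity
          gcongr
          exact e1.trans (by gcongr)
      _ = _ := by rw [hA]; ring
  have hmeas : Measurable (fun ζ => ‖(u (z + ζ) * Complex.exp (-L ζ)) ^ 2‖ₑ) := by
    have := hu.continuous
    have := hLd.continuous
    apply Continuous.measurable
    fun_prop
  set X := jb z ^ ((n : ℝ) + N) * ‖u z‖ * Real.exp (-Φ z) with hX
  have hX0 : 0 ≤ X := by positivity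
  have main : V * ENNReal.ofReal (X ^ 2) ≤ ENNReal.ofReal A * J := by
    calc V * ENNReal.ofReal (X ^ 2)
        = ENNReal.ofReal (jb z ^ (2 * ((n : ℝ) + N)) * Real.exp (-2 * Φ z)) *
          (V * ‖(u (z + 0) * Complex.exp (-L 0)) ^ 2‖ₑ) := by
          rw [mul_left_comm, ← ofReal_norm, ← ENNReal.ofReal_mul (by positivity)]
          congr 2
          have f1 : jb z ^ (2 * ((n : ℝ) + N)) = (jb z ^ ((n : ℝ) + N)) ^ 2 := by
            rw [← Real.rpow_mul_natCast (by linarith)]; congr 1; push_cast; ring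
          have f2 : Real.exp (-2 * Φ z) = Real.exp (-Φ z) ^ 2 := by
            rw [← Real.exp_nat_mul]; congr 1; push_cast; ring
          rw [f1, f2, hL0, hX]
          simp
          ring
      _ ≤ _ := mul_le_mul_right key _
      _ = ∫⁻ ζ in Metric.ball (0 : Fin n → ℂ) 1,
          ENNReal.ofReal (jb z ^ (2 * ((n : ℝ) + N)) * Real.exp (-2 * Φ z)) *
          ‖(u (z + ζ) * Complex.exp (-L ζ)) ^ 2‖ₑ := (lintegral_const_mul _ hmeas).symm
      _ ≤ ∫⁻ ζ in Metric.ball (0 : Fin n → ℂ) 1,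
          ENNReal.ofReal A * ((‖u (z + ζ)‖₊ : ℝ≥0∞) ^ 2 *
        ENNReal.ofReal (jb (z + ζ) ^ (2 * (N + 2 * n)) * Real.exp (-2 * Φ (z + ζ)))) :=
          setLIntegral_mono' Metric.isOpen_ball.measurableSet pt
      _ ≤ ∫⁻ ζ : Fin n → ℂ,
          ENNReal.ofReal A * ((‖u (z + ζ)‖₊ : ℝ≥0∞) ^ 2 *
        ENNReal.ofReal (jb (z + ζ) ^ (2 * (N + 2 * n)) * Real.exp (-2 * Φ (z + ζ)))) :=
          setLIntegral_le_lintegral _ _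
      _ = ENNReal.ofReal A * J := by
          rw [lintegral_const_mul' _ _ ENNReal.ofReal_ne_top, hJ]
          congr 1
          exact lintegral_add_left_eq_self (μ := volume) (fun w : Fin n → ℂ =>
            (‖u w‖₊ : ℝ≥0∞) ^ 2 *
              ENNReal.ofReal (jb w ^ (2 * (N + 2 * n)) * Real.exp (-2 * Φ w))) z
  have h2 : ENNReal.ofReal (X ^ 2) ≤ ENNReal.ofReal (A / V.toReal) * J := by
    rw [ENNReal.ofReal_div_of_pos hVr, ENNReal.ofReal_toReal hVt, div_eq_mul_inv,
      mul_right_comm, ← div_eq_mul_inv, ENNReal.le_div_iff_mul_le (Or.inl hV0) (Or.inl hVt),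
      mul_comm]
    exact main
  have h3 := ENNReal.rpow_le_rpow h2 (by norm_num : (0 : ℝ) ≤ 1 / 2)
  rw [ENNReal.mul_rpow_of_nonneg _ _ (by norm_num : (0 : ℝ) ≤ 1 / 2),
    ENNReal.ofReal_rpow_of_pos (div_pos hA0 hVr),
    ENNReal.ofReal_rpow_of_nonneg (by positivity) (by norm_num), ← Real.sqrt_eq_rpow,
    Real.sqrt_sq hX0] at h3
  exact h3
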